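/- If 0 ≤ ε ≤ 1/2 and D_ε is a good joint probability matrix, then D_{ε(1−ε)} is a good joint probability matrix. -/

import Mathlib

open scoped BigOperators Classical

noncomputable section

/-- Probability of an event `E` under a distribution `μ` on a finite sample space `Ω`. -/
def pr {Ω : Type} [Fintype Ω] (μ : Ω → ℝ) (E : Ω → Prop) : ℝ :=
  ∑ ω, if E ω then μ ω else 0

/-- `μ` is a probability distribution on the finite space `Ω`. -/
def IsProb {Ω : Type} [Fintype Ω] (μ : Ω → ℝ) : Prop :=
  (∀ ω, 0 ≤ μ ω) ∧ ∑ ω, μ ω = 1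

/-- Shannon entropy (base 2) of a random variable `α` on a finite probability space. -/
def ent {Ω A : Type} [Fintype Ω] (μ : Ω → ℝ) (α : Ω → A) : ℝ :=
  -∑ a ∈ Finset.univ.image α,
      pr μ (fun ω => α ω = a) * Real.logb 2 (pr μ (fun ω => α ω = a))

/-- Conditional entropy `H(α | β)`. -/
def condEnt {Ω A B : Type} [Fintype Ω] (μ : Ω → ℝ) (α : Ω → A) (β : Ω → B) : ℝ :=
  ent μ (fun ω => (α ω, β ω)) - ent μ β

/-- Mutual information `I(α : β)`. -/
def mutualInfo {Ω A B : Type} [Fintype Ω] (μ : Ω → ℝ) (α : Ω → A) (β : Ω → B) : ℝ :=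
  ent μ α + ent μ β - ent μ (fun ω => (α ω, β ω))

/-- Conditional mutual information `I(α : β | γ)`. -/
def condMutualInfo {Ω A B C : Type} [Fintype Ω] (μ : Ω → ℝ)
    (α : Ω → A) (β : Ω → B) (γ : Ω → C) : ℝ :=
  condEnt μ α γ + condEnt μ β γ - condEnt μ (fun ω => (α ω, β ω)) γ

/-- Independence of two random variables. -/
def Indep {Ω A B : Type} [Fintype Ω] (μ : Ω → ℝ) (α : Ω → A) (β : Ω → B) : Prop :=
  ∀ (a : A) (b : B),
    pr μ (fun ω => α ω = a ∧ β ω = b) =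
      pr μ (fun ω => α ω = a) * pr μ (fun ω => β ω = b)

/-- Auxiliary form of "conditionally independent of order `k`" (explicit `Fintype`):
`α` and `β` are conditionally independent of order `0` if they are independent,
and of order `k + 1` if on some finite probability space there are random variables
`α₀, β₀, α*, β*` such that `(α₀, β₀)` has the same joint distribution as `(α, β)`,
`I(α₀ : β₀ | α*) = 0`, `I(α₀ : β₀ | β*) = 0`, and `α*, β*` are conditionally
independent of order `k`. -/
def CondIndepOrderAux : ℕ → (Ω A B : Type) → Fintype Ω → (Ω → ℝ) → (Ω → A) → (Ω → B) → Prop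
  | 0, _Ω, _A, _B, iΩ, μ, α, β => @Indep _ _ _ iΩ μ α β
  | k+1, _Ω, A, B, iΩ, μ, α, β =>
      ∃ (Ω' A' B' : Type) (iΩ' : Fintype Ω') (μ' : Ω' → ℝ)
        (α₀ : Ω' → A) (β₀ : Ω' → B) (αs : Ω' → A') (βs : Ω' → B'),
        @IsProb _ iΩ' μ' ∧
        (∀ (a : A) (b : B),
          @pr _ iΩ' μ' (fun ω => α₀ ω = a ∧ β₀ ω = b) =
            @pr _ iΩ μ (fun ω => α ω = a ∧ β ω = b)) ∧
        @condMutualInfo _ _ _ _ iΩ' μ' α₀ β₀ αs = 0 ∧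
        @condMutualInfo _ _ _ _ iΩ' μ' α₀ β₀ βs = 0 ∧
        CondIndepOrderAux k Ω' A' B' iΩ' μ' αs βs

/-- Random variables `α` and `β` on a finite probability space are
conditionally independent of order `k`. -/
def CondIndepOrder {Ω A B : Type} [iΩ : Fintype Ω]
    (μ : Ω → ℝ) (α : Ω → A) (β : Ω → B) (k : ℕ) : Prop :=
  CondIndepOrderAux k Ω A B iΩ μ α β

/-- An `m × n` joint probability matrix: nonnegative entries summing to `1`. -/
def IsJointProbMatrix {m n : ℕ} (M : Matrix (Fin m) (Fin n) ℝ) : Prop :=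
  (∀ i j, 0 ≤ M i j) ∧ ∑ i, ∑ j, M i j = 1

/-- `M` is the joint probability matrix of the pair `(α, β)`. -/
def IsJointMatrixOf {Ω : Type} [Fintype Ω] {m n : ℕ} (M : Matrix (Fin m) (Fin n) ℝ)
    (μ : Ω → ℝ) (α : Ω → Fin m) (β : Ω → Fin n) : Prop :=
  ∀ i j, M i j = pr μ (fun ω => α ω = i ∧ β ω = j)

/-- `M` is a block matrix: rows and columns can be partitioned into two nonempty
parts so that the two diagonal blocks each contain a nonzero element and all
entries outside the diagonal blocks vanish. -/
def IsBlockMatrix {m n : ℕ} (M : Matrix (Fin m) (Fin n) ℝ) : Prop :=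
  ∃ (I₁ : Finset (Fin m)) (J₁ : Finset (Fin n)),
    I₁.Nonempty ∧ I₁ᶜ.Nonempty ∧ J₁.Nonempty ∧ J₁ᶜ.Nonempty ∧
    (∃ i ∈ I₁, ∃ j ∈ J₁, M i j ≠ 0) ∧
    (∃ i ∈ I₁ᶜ, ∃ j ∈ J₁ᶜ, M i j ≠ 0) ∧
    (∀ i j, ((i ∈ I₁ ∧ j ∈ J₁ᶜ) ∨ (i ∈ I₁ᶜ ∧ j ∈ J₁)) → M i j = 0)

/-- `M` is a good matrix: the joint probability matrix of some pair of
conditionally independent random variables (of some finite order). -/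
def IsGoodMatrix {m n : ℕ} (M : Matrix (Fin m) (Fin n) ℝ) : Prop :=
  ∃ (Ω : Type) (iΩ : Fintype Ω) (μ : Ω → ℝ) (α : Ω → Fin m) (β : Ω → Fin n) (k : ℕ),
    @IsProb _ iΩ μ ∧ @IsJointMatrixOf _ iΩ _ _ M μ α β ∧
    @CondIndepOrder _ _ _ iΩ μ α β k

/-- A stochastic matrix: nonnegative entries, all row sums equal to `1`. -/
def IsStochastic {m n : ℕ} (A : Matrix (Fin m) (Fin n) ℝ) : Prop :=
  (∀ i j, 0 ≤ A i j) ∧ ∀ i, ∑ j, A i j = 1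

/-- The matrix `D_ε`: diagonal entries `1/2 - ε`, off-diagonal entries `ε`. -/
def Dmat (ε : ℝ) : Matrix (Fin 2) (Fin 2) ℝ :=
  fun i j => if i = j then 1/2 - ε else ε

/-- The distribution of `n` i.i.d. trials, each distributed according to `μ`. -/
def iidMeasure {Ω : Type} [Fintype Ω] (μ : Ω → ℝ) (n : ℕ) : (Fin n → Ω) → ℝ :=
  fun ωv => ∏ i, μ (ωv i)

/-- The sequence of `n` coordinatewise copies of a random variable. -/
def iidRV {Ω A : Type} (α : Ω → A) (n : ℕ) : (Fin n → Ω) → (Fin n → A) :=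
  fun ωv i => α (ωv i)

/-- `(u, v, w)` belongs to the rate region of the pair `(α, β)`. -/
def InRateRegion {Ω A B : Type} [Fintype Ω] (μ : Ω → ℝ) (α : Ω → A) (β : Ω → B)
    (u v w : ℝ) : Prop :=
  0 ≤ u ∧ 0 ≤ v ∧ 0 ≤ w ∧
  ∀ ε > (0:ℝ), ∀ δ > (0:ℝ), ∃ n₀ : ℕ, ∀ n ≥ n₀,
    ∃ (t : (Fin n → A) × (Fin n → B) → (Fin ⌊(u + δ) * n⌋₊ → Bool))
      (f : (Fin n → A) × (Fin n → B) → (Fin ⌊(v + δ) * n⌋₊ → Bool))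
      (g : (Fin n → A) × (Fin n → B) → (Fin ⌊(w + δ) * n⌋₊ → Bool))
      (r : (Fin ⌊(u + δ) * n⌋₊ → Bool) × (Fin ⌊(v + δ) * n⌋₊ → Bool) → (Fin n → A))
      (s : (Fin ⌊(u + δ) * n⌋₊ → Bool) × (Fin ⌊(w + δ) * n⌋₊ → Bool) → (Fin n → B)),
      pr (iidMeasure μ n) (fun ωv =>
          r (t (iidRV α n ωv, iidRV β n ωv), f (iidRV α n ωv, iidRV β n ωv)) = iidRV α n ωv)
        > 1 - ε ∧
      pr (iidMeasure μ n) (fun ωv =>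
          s (t (iidRV α n ωv, iidRV β n ωv), g (iidRV α n ωv, iidRV β n ωv)) = iidRV β n ωv)
        > 1 - ε

/-- The support of a matrix: the set of positions of its nonzero entries. -/
def msupport {m n : ℕ} (M : Matrix (Fin m) (Fin n) ℝ) : Set (Fin m × Fin n) :=
  {p | M p.1 p.2 ≠ 0}

/-- An r-matrix: nonnegative entries and rectangular support. -/
def IsRMatrix {m n : ℕ} (M : Matrix (Fin m) (Fin n) ℝ) : Prop :=
  (∀ i j, 0 ≤ M i j) ∧ ∃ (A : Set (Fin m)) (B : Set (Fin n)), msupport M = A ×ˢ B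

/-- An r-decomposition of `M`: an expression of `M` as a finite sum of r-matrices
such that the supports of consecutive summands intersect. -/
def IsRDecomposition {m n : ℕ} (M : Matrix (Fin m) (Fin n) ℝ)
    (l : ℕ) (Ms : Fin l → Matrix (Fin m) (Fin n) ℝ) : Prop :=
  M = ∑ i, Ms i ∧ (∀ i, IsRMatrix (Ms i)) ∧
  ∀ (i : ℕ) (h : i + 1 < l),
    (msupport (Ms ⟨i, Nat.lt_of_succ_lt h⟩) ∩ msupport (Ms ⟨i + 1, h⟩)).Nonempty

end

/-!
Let `(α*, β*)` have joint matrix `D_ε`. When `α* = β*`, put `α = β = α*`; when `α* ≠ β*`, draw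
`(α, β)` with joint matrix `D_{(1-ε)/2}`. Given `α* = c`, the probabilities of `(α, β)` are then
`(1 - ε)²` for `α = β = c`, `ε²` for `α = β ≠ c` and `ε(1 - ε)` for each of the two remaining
values: `α` and `β` are independent copies of `c`, each flipped with probability `ε`. The situation
is symmetric in `α*` and `β*`, so if `(α*, β*)` is conditionally independent of order `k`, then
`(α, β)` is conditionally independent of order `k + 1`, and its joint matrix is `D_{ε(1-ε)}`.
-/

section FiniteProbability

variable {Ω A B C : Type} [Fintype Ω] {μ : Ω → ℝ}

lemma pr_nonneg (hμ : ∀ ω, 0 ≤ μ ω) (E : Ω → Prop) : 0 ≤ pr μ E :=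
  Finset.sum_nonneg fun ω _ => ite_nonneg (hμ ω) le_rfl

lemma pr_pos (hμ : ∀ ω, 0 ≤ μ ω) {E : Ω → Prop} {ω : Ω} (hE : E ω) (hω : 0 < μ ω) :
    0 < pr μ E :=
  Finset.sum_pos' (fun ω' _ => ite_nonneg (hμ ω') le_rfl)
    ⟨ω, Finset.mem_univ ω, by rwa [if_pos hE]⟩

lemma pr_eq_sum_pr_and (μ : Ω → ℝ) (E : Ω → Prop) {β : Ω → B} {s : Finset B}
    (hs : ∀ ω, β ω ∈ s) : pr μ E = ∑ b ∈ s, pr μ (fun ω => E ω ∧ β ω = b) := by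
  simp only [pr]
  rw [Finset.sum_comm]
  refine Finset.sum_congr rfl fun ω _ => ?_
  by_cases hE : E ω <;> simp [hE, hs ω]

lemma pr_eq_sum_pr_and_left (μ : Ω → ℝ) (E : Ω → Prop) {β : Ω → B} {s : Finset B}
    (hs : ∀ ω, β ω ∈ s) : pr μ E = ∑ b ∈ s, pr μ (fun ω => β ω = b ∧ E ω) := by
  simpa only [and_comm] using pr_eq_sum_pr_and μ E hs

lemma ent_eq_neg_sum (μ : Ω → ℝ) (α : Ω → A) :
    ent μ α = -∑ ω, μ ω * Real.logb 2 (pr μ fun ω' => α ω' = α ω) := by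
  rw [ent, ← Finset.sum_fiberwise_of_maps_to (g := α)
    fun ω _ => Finset.mem_image_of_mem α (Finset.mem_univ ω)]
  refine congrArg Neg.neg (Finset.sum_congr rfl fun a _ => ?_)
  have hfiber : pr μ (fun ω => α ω = a) = ∑ ω with α ω = a, μ ω :=
    (Finset.sum_filter _ _).symm
  nth_rw 1 [hfiber]
  rw [Finset.sum_mul]
  refine Finset.sum_congr rfl fun ω hω => ?_
  rw [(Finset.mem_filter.1 hω).2]

lemma condMutualInfo_eq_sum (μ : Ω → ℝ) (α : Ω → A) (β : Ω → B) (γ : Ω → C) :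
    condMutualInfo μ α β γ = ∑ ω, μ ω *
      (Real.logb 2 (pr μ fun ω' => α ω' = α ω ∧ β ω' = β ω ∧ γ ω' = γ ω) +
        Real.logb 2 (pr μ fun ω' => γ ω' = γ ω) -
        Real.logb 2 (pr μ fun ω' => α ω' = α ω ∧ γ ω' = γ ω) -
        Real.logb 2 (pr μ fun ω' => β ω' = β ω ∧ γ ω' = γ ω)) := by
  simp only [condMutualInfo, condEnt, ent_eq_neg_sum, Prod.mk.injEq, and_assoc, mul_sub, mul_add,
    Finset.sum_sub_distrib, Finset.sum_add_distrib]
  ring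

lemma condMutualInfo_eq_zero_of_pr_mul (hμ : ∀ ω, 0 ≤ μ ω) {α : Ω → A} {β : Ω → B} {γ : Ω → C}
    (hmul : ∀ a b c,
      pr μ (fun ω => α ω = a ∧ β ω = b ∧ γ ω = c) * pr μ (fun ω => γ ω = c) =
        pr μ (fun ω => α ω = a ∧ γ ω = c) * pr μ (fun ω => β ω = b ∧ γ ω = c)) :
    condMutualInfo μ α β γ = 0 := by
  rw [condMutualInfo_eq_sum]
  refine Finset.sum_eq_zero fun ω _ => ?_
  rcases (hμ ω).eq_or_lt with hω | hω
  · rw [← hω, zero_mul]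
  · have hlog := congrArg (Real.logb 2) (hmul (α ω) (β ω) (γ ω))
    rw [Real.logb_mul, Real.logb_mul] at hlog
    · linear_combination μ ω * hlog
    all_goals exact (pr_pos hμ (by simp only [and_self]) hω).ne'

lemma condMutualInfo_eq_zero_of_factorization (hμ : ∀ ω, 0 ≤ μ ω)
    {α : Ω → A} {β : Ω → B} {γ : Ω → C} (f : C → A → ℝ) (g : C → B → ℝ)
    (hfg : ∀ a b c, pr μ (fun ω => α ω = a ∧ β ω = b ∧ γ ω = c) = f c a * g c b) :
    condMutualInfo μ α β γ = 0 := by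
  have hs (ω : Ω) : α ω ∈ Finset.univ.image α := Finset.mem_image_of_mem α (Finset.mem_univ ω)
  have ht (ω : Ω) : β ω ∈ Finset.univ.image β := Finset.mem_image_of_mem β (Finset.mem_univ ω)
  set s := Finset.univ.image α
  set t := Finset.univ.image β
  have hα (a : A) (c : C) : pr μ (fun ω => α ω = a ∧ γ ω = c) = f c a * ∑ b ∈ t, g c b := by
    rw [pr_eq_sum_pr_and_left μ _ ht, Finset.mul_sum]
    simp only [← hfg, and_left_comm]
  have hβ (b : B) (c : C) : pr μ (fun ω => β ω = b ∧ γ ω = c) = (∑ a ∈ s, f c a) * g c b := by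
    rw [pr_eq_sum_pr_and_left μ _ hs, Finset.sum_mul]
    simp only [← hfg]
  have hγ (c : C) : pr μ (fun ω => γ ω = c) = (∑ a ∈ s, f c a) * ∑ b ∈ t, g c b := by
    rw [pr_eq_sum_pr_and_left μ _ hs, Finset.sum_mul]
    simp only [← hα]
  refine condMutualInfo_eq_zero_of_pr_mul hμ fun a b c => ?_
  rw [hfg, hα, hβ, hγ]
  ring

section Congr

variable {Ω' : Type} [Fintype Ω'] {μ' : Ω' → ℝ} {α : Ω → A} {β : Ω → B} {α' : Ω' → A} {β' : Ω' → B}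

lemma pr_left_congr
    (hlaw : ∀ a b, pr μ (fun ω => α ω = a ∧ β ω = b) = pr μ' (fun ω => α' ω = a ∧ β' ω = b))
    (a : A) : pr μ (fun ω => α ω = a) = pr μ' (fun ω => α' ω = a) := by
  rw [pr_eq_sum_pr_and μ _ (β := β) (s := Finset.univ.image β ∪ Finset.univ.image β') (by simp),
    pr_eq_sum_pr_and μ' _ (β := β') (s := Finset.univ.image β ∪ Finset.univ.image β') (by simp)]
  simp only [hlaw]

lemma Indep.congr
    (hlaw : ∀ a b, pr μ (fun ω => α ω = a ∧ β ω = b) = pr μ' (fun ω => α' ω = a ∧ β' ω = b))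
    (h : Indep μ α β) : Indep μ' α' β' := by
  have hβ (b : B) : pr μ (fun ω => β ω = b) = pr μ' (fun ω => β' ω = b) :=
    pr_left_congr (β := α) (β' := α') (fun b a => by simpa only [and_comm] using hlaw a b) b
  intro a b
  rw [← hlaw, ← pr_left_congr hlaw, ← hβ, h]

lemma CondIndepOrder.congr {k : ℕ}
    (hlaw : ∀ a b, pr μ (fun ω => α ω = a ∧ β ω = b) = pr μ' (fun ω => α' ω = a ∧ β' ω = b))
    (h : CondIndepOrder μ α β k) : CondIndepOrder μ' α' β' k := by
  cases k with
  | zero => exact Indep.congr hlaw h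
  | succ k =>
    obtain ⟨Ω₁, A₁, B₁, iΩ₁, μ₁, α₀, β₀, αs, βs, hμ₁, hlaw₁, hstar⟩ := h
    exact ⟨Ω₁, A₁, B₁, iΩ₁, μ₁, α₀, β₀, αs, βs, hμ₁,
      fun a b => (hlaw₁ a b).trans (hlaw a b), hstar⟩

end Congr

lemma CondIndepOrder.succ {α : Ω → A} {β : Ω → B} {A' B' : Type} {αs : Ω → A'} {βs : Ω → B'}
    {k : ℕ} (hμ : IsProb μ) (hαs : condMutualInfo μ α β αs = 0)
    (hβs : condMutualInfo μ α β βs = 0) (h : CondIndepOrder μ αs βs k) :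
    CondIndepOrder μ α β (k + 1) :=
  ⟨Ω, A', B', inferInstance, μ, α, β, αs, βs, hμ, fun _ _ => rfl, hαs, hβs, h⟩

end FiniteProbability

section Mixture

variable {m n p q : ℕ} {M : Matrix (Fin p) (Fin q) ℝ}
  {K : Fin p → Fin q → Matrix (Fin m) (Fin n) ℝ}

lemma IsJointMatrixOf.isJointProbMatrix {Ω : Type} [Fintype Ω] {μ : Ω → ℝ} {α : Ω → Fin p}
    {β : Ω → Fin q} (hM : IsJointMatrixOf M μ α β) (hμ : IsProb μ) : IsJointProbMatrix M := by
  refine ⟨fun i j => (hM i j).symm ▸ pr_nonneg hμ.1 _, ?_⟩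
  calc ∑ i, ∑ j, M i j = ∑ i, pr μ (fun ω => True ∧ α ω = i) := by
        simp only [hM _ _, true_and, pr_eq_sum_pr_and μ (fun ω => α ω = _) (Finset.mem_univ <| β ·)]
    _ = pr μ (fun _ => True) := (pr_eq_sum_pr_and μ _ (Finset.mem_univ <| α ·)).symm
    _ = 1 := by simpa only [pr, if_true] using hμ.2

/-- The joint distribution of `((α*, β*), (α, β))` when `(α*, β*)` has joint probability matrix `M`
and, given `α* = c` and `β* = d`, the pair `(α, β)` has joint probability matrix `K c d`. -/
def mixtureMeasure (M : Matrix (Fin p) (Fin q) ℝ) (K : Fin p → Fin q → Matrix (Fin m) (Fin n) ℝ) :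
    (Fin p × Fin q) × (Fin m × Fin n) → ℝ :=
  fun ω => M ω.1.1 ω.1.2 * K ω.1.1 ω.1.2 ω.2.1 ω.2.2

lemma isProb_mixtureMeasure (hM : IsJointProbMatrix M) (hK : ∀ c d, IsJointProbMatrix (K c d)) :
    IsProb (mixtureMeasure M K) := by
  refine ⟨fun ω => mul_nonneg (hM.1 _ _) ((hK _ _).1 _ _), ?_⟩
  simp only [mixtureMeasure, Fintype.sum_prod_type, ← Finset.mul_sum, (hK _ _).2, mul_one, hM.2]

lemma pr_mixtureMeasure_fst (hK : ∀ c d, IsJointProbMatrix (K c d)) (c : Fin p) (d : Fin q) :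
    pr (mixtureMeasure M K) (fun ω => ω.1.1 = c ∧ ω.1.2 = d) = M c d := by
  simp [pr, mixtureMeasure, Fintype.sum_prod_type, ite_and, ← Finset.mul_sum, (hK c d).2]

lemma pr_mixtureMeasure_snd (a : Fin m) (b : Fin n) :
    pr (mixtureMeasure M K) (fun ω => ω.2.1 = a ∧ ω.2.2 = b) =
      (∑ c, ∑ d, M c d • K c d) a b := by
  simp [pr, mixtureMeasure, Fintype.sum_prod_type, ite_and, Matrix.sum_apply]

lemma pr_mixtureMeasure_snd_and_row (a : Fin m) (b : Fin n) (c : Fin p) :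
    pr (mixtureMeasure M K) (fun ω => ω.2.1 = a ∧ ω.2.2 = b ∧ ω.1.1 = c) =
      (∑ d, M c d • K c d) a b := by
  simp [pr, mixtureMeasure, Fintype.sum_prod_type, ite_and, Matrix.sum_apply]

lemma pr_mixtureMeasure_snd_and_col (a : Fin m) (b : Fin n) (d : Fin q) :
    pr (mixtureMeasure M K) (fun ω => ω.2.1 = a ∧ ω.2.2 = b ∧ ω.1.2 = d) =
      (∑ c, M c d • K c d) a b := by
  simp [pr, mixtureMeasure, Fintype.sum_prod_type, ite_and, Matrix.sum_apply]

theorem IsGoodMatrix.sum_smul (hM : IsGoodMatrix M) (hK : ∀ c d, IsJointProbMatrix (K c d))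
    (hrow : ∀ c, ∃ f g, ∑ d, M c d • K c d = Matrix.vecMulVec f g)
    (hcol : ∀ d, ∃ f g, ∑ c, M c d • K c d = Matrix.vecMulVec f g) :
    IsGoodMatrix (∑ c, ∑ d, M c d • K c d) := by
  obtain ⟨Ω, iΩ, μ, αs, βs, k, hμ, hMμ, hk⟩ := hM
  choose f g hfg using hrow
  choose f' g' hfg' using hcol
  have hmix : IsProb (mixtureMeasure M K) :=
    isProb_mixtureMeasure (hMμ.isJointProbMatrix hμ) hK
  refine ⟨_, inferInstance, mixtureMeasure M K, fun ω => ω.2.1, fun ω => ω.2.2, k + 1, hmix,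
    fun a b => (pr_mixtureMeasure_snd a b).symm,
    CondIndepOrder.succ (αs := fun ω => ω.1.1) (βs := fun ω => ω.1.2) hmix ?_ ?_
      (hk.congr fun c d => (hMμ c d).symm.trans (pr_mixtureMeasure_fst hK c d).symm)⟩
  · refine condMutualInfo_eq_zero_of_factorization hmix.1 f g fun a b c => ?_
    rw [pr_mixtureMeasure_snd_and_row, hfg, Matrix.vecMulVec_apply]
  · refine condMutualInfo_eq_zero_of_factorization hmix.1 f' g' fun a b d => ?_
    rw [pr_mixtureMeasure_snd_and_col, hfg', Matrix.vecMulVec_apply]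

end Mixture

section Dmat

variable {ε : ℝ}

/-- The distribution of the bit `c` after it is flipped with probability `ε`: row `c` of the
transition matrix of the binary symmetric channel. -/
def flipDist (ε : ℝ) (c : Fin 2) : Fin 2 → ℝ :=
  fun a => if a = c then 1 - ε else ε

/-- The joint probability matrix of `(α, β)` given `α* = c` and `β* = d`, in the coupling that
takes a pair `(α*, β*)` with matrix `D_ε` to a pair `(α, β)` with matrix `D_{ε(1-ε)}`. -/
noncomputable def stepKernel (ε : ℝ) (c d : Fin 2) : Matrix (Fin 2) (Fin 2) ℝ :=
  if c = d then Matrix.single c c 1 else Dmat ((1 - ε) / 2)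

lemma isJointProbMatrix_single {m n : ℕ} (i : Fin m) (j : Fin n) :
    IsJointProbMatrix (Matrix.single i j (1 : ℝ)) := by
  refine ⟨fun i' j' => ?_, by simp [Matrix.single_apply, ite_and]⟩
  rw [Matrix.single_apply]
  exact ite_nonneg zero_le_one le_rfl

lemma isJointProbMatrix_Dmat (h0 : 0 ≤ ε) (h1 : ε ≤ 1 / 2) : IsJointProbMatrix (Dmat ε) := by
  refine ⟨fun i j => ite_nonneg (sub_nonneg.2 h1) h0, ?_⟩
  simp only [Dmat, Fin.sum_univ_two, if_true, Fin.zero_eq_one_iff, Fin.one_eq_zero_iff,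
    OfNat.ofNat_ne_one, if_false]
  ring

lemma isJointProbMatrix_stepKernel (h0 : 0 ≤ ε) (h1 : ε ≤ 1) (c d : Fin 2) :
    IsJointProbMatrix (stepKernel ε c d) := by
  unfold stepKernel
  split_ifs
  · exact isJointProbMatrix_single c c
  · exact isJointProbMatrix_Dmat (by linarith) (by linarith)

lemma Dmat_comm (ε : ℝ) (c d : Fin 2) : Dmat ε c d = Dmat ε d c := by
  simp only [Dmat, eq_comm]

lemma stepKernel_comm (ε : ℝ) (c d : Fin 2) : stepKernel ε c d = stepKernel ε d c := by
  obtain rfl | hcd := eq_or_ne c d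
  · rfl
  · simp only [stepKernel, hcd, hcd.symm, if_false]

lemma sum_Dmat_smul_stepKernel (ε : ℝ) (c : Fin 2) :
    ∑ d, Dmat ε c d • stepKernel ε c d =
      Matrix.vecMulVec ((1 / 2 : ℝ) • flipDist ε c) (flipDist ε c) := by
  ext a b
  fin_cases c <;> fin_cases a <;> fin_cases b <;>
    simp [Dmat, stepKernel, flipDist, Matrix.vecMulVec_apply] <;> ring

lemma sum_sum_Dmat_smul_stepKernel (ε : ℝ) :
    ∑ c, ∑ d, Dmat ε c d • stepKernel ε c d = Dmat (ε * (1 - ε)) := by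
  simp only [sum_Dmat_smul_stepKernel]
  ext a b
  fin_cases a <;> fin_cases b <;> simp [Dmat, flipDist, Matrix.vecMulVec_apply] <;> ring

end Dmat

/-- If `0 ≤ ε ≤ 1/2` and `D_ε` is a good joint probability matrix,
then `D_{ε(1−ε)}` is a good joint probability matrix. -/
theorem isGoodMatrix_Dmat_step (ε : ℝ) (h0 : 0 ≤ ε) (h1 : ε ≤ 1/2)
    (h : IsGoodMatrix (Dmat ε)) :
    IsGoodMatrix (Dmat (ε * (1 - ε))) := by
  have hcol (d : Fin 2) : ∑ c, Dmat ε c d • stepKernel ε c d =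
      Matrix.vecMulVec ((1 / 2 : ℝ) • flipDist ε d) (flipDist ε d) := by
    simpa only [Dmat_comm ε d, stepKernel_comm ε d] using sum_Dmat_smul_stepKernel ε d
  rw [← sum_sum_Dmat_smul_stepKernel]
  exact h.sum_smul (isJointProbMatrix_stepKernel h0 (by linarith))
    (fun c => ⟨_, _, sum_Dmat_smul_stepKernel ε c⟩) (fun d => ⟨_, _, hcol d⟩)
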